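/- arXiv:1301.1846 — 3 statements merged into one kernel-verified Lean document; each statement's English description precedes it below -/
import Mathlib

section
/- Let a₁, b₁, c₁ and a₂, b₂, c₂ be complex numbers with a₁²+b₁² ≠ 0 and a₂²+b₂² ≠ 0, write M₁ = M_{a₁,b₁,c₁}, M₂ = M_{a₂,b₂,c₂}, L₁ = L_{a₁,b₁,c₁}, L₂ = L_{a₂,b₂,c₂}. Let u, u' ∈ ℂ³ be linearly independent vectors with L₁(u) = 0 and L₂(u') = 0, and set U = span{u, u'}. If M₁(U) = M₂(U) as subspaces of ℂ³, then M₁(U) = U = M₂(U). (Projectively: if the images of the line (m m') under the symmetries with respect to the tangents at m and at m' coincide, then that common image is the line (m m') itself.) -/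
/-!
The symmetry `M_{a,b,c}` scales every vector of the mirror line `ker L_{a,b,c}` by `a² + b²`. So
`u ∈ M₁(U)` and `u' ∈ M₂(U)`; when the two images coincide, the common image contains both `u` and
`u'`, hence `U`. A linear image of `U` has dimension at most `dim U`, so the inclusion is an
equality.
-/

/-- The linear form `L_{a,b,c}(x,y,z) = a*x + b*y + c*z` on `ℂ³`. -/
noncomputable def Lmap (a b c : ℂ) : (Fin 3 → ℂ) →ₗ[ℂ] ℂ where
  toFun v := a * v 0 + b * v 1 + c * v 2
  map_add' u v := by simp only [Pi.add_apply]; ring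
  map_smul' t v := by simp only [Pi.smul_apply, smul_eq_mul, RingHom.id_apply]; ring

/-- The vector `w_{a,b} = (a, b, 0)` in `ℂ³`. -/
def wvec (a b : ℂ) : Fin 3 → ℂ := ![a, b, 0]

/-- The linear map `M_{a,b,c}(v) = (a²+b²)·v − 2·L_{a,b,c}(v)·w_{a,b}` on `ℂ³`,
inducing the orthogonal symmetry with respect to the line `V(ax+by+cz)` when `a²+b² ≠ 0`. -/
noncomputable def Mmap (a b c : ℂ) : (Fin 3 → ℂ) →ₗ[ℂ] (Fin 3 → ℂ) :=
  (a ^ 2 + b ^ 2) • LinearMap.id - (2 : ℂ) • (Lmap a b c).smulRight (wvec a b)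


/-- A vector of `U` on the mirror line lies in the image of `U`, being an eigenvector for the
nonzero eigenvalue `a² + b²`. -/
lemma mem_map_Mmap_of_Lmap_eq_zero {a b c : ℂ} (h : a ^ 2 + b ^ 2 ≠ 0) {v : Fin 3 → ℂ}
    (hv : Lmap a b c v = 0) {U : Submodule ℂ (Fin 3 → ℂ)} (hvU : v ∈ U) :
    v ∈ Submodule.map (Mmap a b c) U := by
  have hM : Mmap a b c v = (a ^ 2 + b ^ 2) • v := by simp [Mmap, hv]
  rw [← Submodule.smul_mem_iff _ h, ← hM]
  exact Submodule.mem_map_of_mem hvU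

/-- With `a₁²+b₁² ≠ 0`, `a₂²+b₂² ≠ 0`, `u, u'` linearly independent, `L₁(u) = 0`,
`L₂(u') = 0` and `U = span{u, u'}`: if `M₁(U) = M₂(U)` then `M₁(U) = U = M₂(U)`.
(Projectively: if the images of the line `(m m')` under the symmetries with respect to
the tangents at `m` and at `m'` coincide, then that common image is `(m m')` itself.) -/
theorem stmt_5 (a₁ b₁ c₁ a₂ b₂ c₂ : ℂ)
    (h₁ : a₁ ^ 2 + b₁ ^ 2 ≠ 0) (h₂ : a₂ ^ 2 + b₂ ^ 2 ≠ 0)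
    (u u' : Fin 3 → ℂ) (hind : LinearIndependent ℂ ![u, u'])
    (hLu : Lmap a₁ b₁ c₁ u = 0) (hLu' : Lmap a₂ b₂ c₂ u' = 0)
    (U : Submodule ℂ (Fin 3 → ℂ)) (hU : U = Submodule.span ℂ {u, u'})
    (heq : Submodule.map (Mmap a₁ b₁ c₁) U = Submodule.map (Mmap a₂ b₂ c₂) U) :
    Submodule.map (Mmap a₁ b₁ c₁) U = U ∧ Submodule.map (Mmap a₂ b₂ c₂) U = U := by
  have hle : U ≤ Submodule.map (Mmap a₁ b₁ c₁) U := by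
    have hu : u ∈ U := hU ▸ Submodule.subset_span (by simp)
    have hu' : u' ∈ U := hU ▸ Submodule.subset_span (by simp)
    conv_lhs => rw [hU]
    rw [Submodule.span_le, Set.insert_subset_iff, Set.singleton_subset_iff]
    exact ⟨mem_map_Mmap_of_Lmap_eq_zero h₁ hLu hu,
      heq ▸ mem_map_Mmap_of_Lmap_eq_zero h₂ hLu' hu'⟩
  have key : Submodule.map (Mmap a₁ b₁ c₁) U = U :=
    (Submodule.eq_of_le_of_finrank_le hle (Submodule.finrank_map_le _ _)).symm
  exact ⟨key, heq ▸ key⟩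
end

section
/- Let a₁, b₁, c₁ and a₂, b₂, c₂ be complex numbers with a₁²+b₁² ≠ 0 and a₂²+b₂² ≠ 0, write M₁ = M_{a₁,b₁,c₁}, M₂ = M_{a₂,b₂,c₂}, L₁ = L_{a₁,b₁,c₁}, L₂ = L_{a₂,b₂,c₂}, w₁ = w_{a₁,b₁}, w₂ = w_{a₂,b₂}. Let u, u' ∈ ℂ³ be linearly independent with L₁(u) = 0 and L₂(u') = 0, and set U = span{u, u'}. If M₁(U) = M₂(U), then U ∈ {ker L₁, span{u, w₁}} and U ∈ {ker L₂, span{u', w₂}}. (Projectively: if the two reflected lines coincide, then the line (m m') belongs to {tangent at m, normal at m} and to {tangent at m', normal at m'}.) -/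
theorem Lmap_wvec (a b c : ℂ) : Lmap a b c (wvec a b) = a ^ 2 + b ^ 2 := by
  simp [Lmap, wvec]; ring

theorem Mmap_eq (a b c : ℂ) (v : Fin 3 → ℂ) :
    Mmap a b c v = (a ^ 2 + b ^ 2) • v - (2 * Lmap a b c v) • wvec a b := by
  simp [Mmap, mul_smul]

theorem Mmap_Mmap (a b c : ℂ) (v : Fin 3 → ℂ) :
    Mmap a b c (Mmap a b c v) = (a ^ 2 + b ^ 2) ^ 2 • v := by
  simp only [Mmap_eq, map_sub, map_smul, Lmap_wvec]
  module

theorem finrank_span_pair_eq_two {x y : Fin 3 → ℂ} (h : LinearIndependent ℂ ![x, y]) :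
    Module.finrank ℂ (Submodule.span ℂ {x, y}) = 2 := by
  have hc := finrank_span_eq_card h
  rwa [Matrix.range_cons_cons_empty, Fintype.card_fin] at hc

theorem finrank_ker_Lmap {a b c : ℂ} (h : a ^ 2 + b ^ 2 ≠ 0) :
    Module.finrank ℂ (LinearMap.ker (Lmap a b c)) = 2 := by
  have hne : Lmap a b c ≠ 0 := fun h0 => h (by rw [← Lmap_wvec a b c, h0]; rfl)
  have hr := LinearMap.finrank_range_add_finrank_ker (Lmap a b c)
  rw [LinearMap.range_eq_top.2 (LinearMap.surjective hne), finrank_top, Module.finrank_self,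
    Module.finrank_fin_fun] at hr
  omega

/-- As `M` is an involution up to scaling, `x ∈ M U` forces `M x ∈ U`, which puts the component of
`M x` along `w` in `U` as soon as `x ∈ U`. -/
theorem mem_of_mem_map {a b c : ℂ} {x : Fin 3 → ℂ} {U : Submodule ℂ (Fin 3 → ℂ)} (hx : x ∈ U)
    (hxM : x ∈ U.map (Mmap a b c)) : Lmap a b c x = 0 ∨ wvec a b ∈ U := by
  by_cases hL : Lmap a b c x = 0
  · exact Or.inl hL
  obtain ⟨y, hy, hyx⟩ := hxM
  have hM : Mmap a b c x ∈ U := by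
    rw [← hyx, Mmap_Mmap]
    exact U.smul_mem _ hy
  rw [Mmap_eq, Submodule.sub_mem_iff_right _ (U.smul_mem _ hx)] at hM
  exact Or.inr ((U.smul_mem_iff (mul_ne_zero two_ne_zero hL)).1 hM)

/-- One half of the theorem: `L y = 0`, `x` is the other spanning vector of the plane `U`, and of
the equality of the two reflected planes only `x ∈ M U` is needed. -/
theorem eq_ker_or_eq_span {a b c : ℂ} (h : a ^ 2 + b ^ 2 ≠ 0) {x y : Fin 3 → ℂ}
    (hind : LinearIndependent ℂ ![x, y]) (hLy : Lmap a b c y = 0)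
    (hxM : x ∈ (Submodule.span ℂ {x, y}).map (Mmap a b c)) :
    Submodule.span ℂ {x, y} = LinearMap.ker (Lmap a b c) ∨
      Submodule.span ℂ {x, y} = Submodule.span ℂ {y, wvec a b} := by
  have hx : x ∈ Submodule.span ℂ {x, y} := Submodule.subset_span (by simp)
  have hy : y ∈ Submodule.span ℂ {x, y} := Submodule.subset_span (by simp)
  have hrank := finrank_span_pair_eq_two hind
  rcases mem_of_mem_map hx hxM with hLx | hw
  · refine Or.inl (Submodule.eq_of_le_of_finrank_eq ?_ (hrank.trans (finrank_ker_Lmap h).symm))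
    rw [Submodule.span_le, Set.pair_subset_iff]
    exact ⟨hLx, hLy⟩
  · have hyw : LinearIndependent ℂ ![y, wvec a b] := by
      have hy0 : y ≠ 0 := hind.ne_zero 1
      rw [LinearIndependent.pair_iff' hy0]
      intro t ht
      apply h
      rw [← Lmap_wvec a b c, ← ht, map_smul, hLy, smul_zero]
    refine Or.inr (Submodule.eq_of_le_of_finrank_eq ?_
      ((finrank_span_pair_eq_two hyw).trans hrank.symm)).symm
    rw [Submodule.span_le, Set.pair_subset_iff]
    exact ⟨hy, hw⟩

/-- The map `M` scales `ker L` by `a² + b² ≠ 0`. -/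
theorem mem_map_of_Lmap_eq_zero {a b c : ℂ} (h : a ^ 2 + b ^ 2 ≠ 0) {x : Fin 3 → ℂ}
    {U : Submodule ℂ (Fin 3 → ℂ)} (hx : x ∈ U) (hL : Lmap a b c x = 0) :
    x ∈ U.map (Mmap a b c) := by
  have hM : Mmap a b c x ∈ U.map (Mmap a b c) := Submodule.mem_map_of_mem hx
  rw [Mmap_eq, hL, mul_zero, zero_smul, sub_zero] at hM
  exact (Submodule.smul_mem_iff _ h).1 hM

/-- With `a₁²+b₁² ≠ 0`, `a₂²+b₂² ≠ 0`, `u, u'` linearly independent, `L₁(u) = 0`,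
`L₂(u') = 0` and `U = span{u, u'}`: if `M₁(U) = M₂(U)` then
`U ∈ {ker L₁, span{u, w₁}}` and `U ∈ {ker L₂, span{u', w₂}}`. (Projectively: if the two
reflected lines coincide, then the line `(m m')` belongs to {tangent at m, normal at m}
and to {tangent at m', normal at m'}.) -/
theorem stmt_6 (a₁ b₁ c₁ a₂ b₂ c₂ : ℂ)
    (h₁ : a₁ ^ 2 + b₁ ^ 2 ≠ 0) (h₂ : a₂ ^ 2 + b₂ ^ 2 ≠ 0)
    (u u' : Fin 3 → ℂ) (hind : LinearIndependent ℂ ![u, u'])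
    (hLu : Lmap a₁ b₁ c₁ u = 0) (hLu' : Lmap a₂ b₂ c₂ u' = 0)
    (U : Submodule ℂ (Fin 3 → ℂ)) (hU : U = Submodule.span ℂ {u, u'})
    (heq : Submodule.map (Mmap a₁ b₁ c₁) U = Submodule.map (Mmap a₂ b₂ c₂) U) :
    (U = LinearMap.ker (Lmap a₁ b₁ c₁) ∨ U = Submodule.span ℂ {u, wvec a₁ b₁}) ∧
    (U = LinearMap.ker (Lmap a₂ b₂ c₂) ∨ U = Submodule.span ℂ {u', wvec a₂ b₂}) := by
  subst hU
  have hu : u ∈ Submodule.span ℂ {u, u'} := Submodule.subset_span (by simp)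
  have hu' : u' ∈ Submodule.span ℂ {u, u'} := Submodule.subset_span (by simp)
  have hM : u ∈ (Submodule.span ℂ {u, u'}).map (Mmap a₂ b₂ c₂) :=
    heq ▸ mem_map_of_Lmap_eq_zero h₁ hu hLu
  have hM' : u' ∈ (Submodule.span ℂ {u, u'}).map (Mmap a₁ b₁ c₁) :=
    heq ▸ mem_map_of_Lmap_eq_zero h₂ hu' hLu'
  refine ⟨?_, eq_ker_or_eq_span h₂ hind hLu' hM⟩
  rw [Set.pair_comm] at hM' ⊢
  exact eq_ker_or_eq_span h₁ (LinearIndependent.pair_symm_iff.1 hind) hLu hM'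
end

section
/- Let X be a type, let (F_j)_{j ∈ ℕ} be a monotone increasing sequence of subsets of X (F_j ⊆ F_{j+1} for all j), and set Z := ⋃_{j ∈ ℕ} F_j. Let C₁, …, C_p be subsets of X with Z ⊆ C₁ ∪ … ∪ C_p, and let N ∈ ℕ. Assume that for each i ∈ {1, …, p}, either (i) there exists j with C_i ⊆ F_j, or (ii) for every j the set C_i ∩ F_j is finite with at most N elements. Then there exists j ∈ ℕ with Z = F_j. -/
/-!
For each `i` the trace `C i ∩ F k` lies in a single `F j`, uniformly in `k`. This is clear when
`C i` is contained in some `F j`. Otherwise the cardinalities of the increasing finite sets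
`C i ∩ F k` are bounded, so one of these sets has maximal cardinality, and it contains all the
others (`exists_inter_subset_of_ncard_le`). As there are finitely many `C i` and they cover the
union of the `F k`, the largest of these indices `j` works for the whole union.
-/

/-- An increasing sequence of finite traces `C ∩ F k` of bounded cardinality is stationary. -/
theorem exists_inter_subset_of_ncard_le {X : Type*} {F : ℕ → Set X} (hF : Monotone F)
    (C : Set X) (N : ℕ) (h : ∀ j, (C ∩ F j).Finite ∧ (C ∩ F j).ncard ≤ N) :
    ∃ j, ∀ k, C ∩ F k ⊆ F j := by
  have hbdd : BddAbove (Set.range fun j => (C ∩ F j).ncard) :=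
    ⟨N, by rintro _ ⟨j, rfl⟩; exact (h j).2⟩
  obtain ⟨j, hj⟩ := Nat.sSup_mem (Set.range_nonempty _) hbdd
  refine ⟨j, fun k => ?_⟩
  have hmax : (C ∩ F (max j k)).ncard ≤ (C ∩ F j).ncard :=
    (le_csSup hbdd ⟨max j k, rfl⟩).trans hj.ge
  have heq : C ∩ F j = C ∩ F (max j k) :=
    Set.eq_of_subset_of_ncard_le
      (Set.inter_subset_inter_right C (hF (le_max_left j k))) hmax (h _).1
  have hk : C ∩ F k ⊆ C ∩ F (max j k) :=
    Set.inter_subset_inter_right C (hF (le_max_right j k))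
  exact (hk.trans heq.ge).trans Set.inter_subset_right


/-- Let `(F j)` be an increasing sequence of subsets of `X` with union `Z`, and let
`C 1, …, C p` be subsets covering `Z`. If each `C i` either is contained in some `F j`,
or meets every `F j` in a finite set of at most `N` elements, then `Z = F j` for
some `j`. -/
theorem stmt_10 {X : Type*} (F : ℕ → Set X) (hmono : ∀ j, F j ⊆ F (j + 1))
    (p : ℕ) (C : Fin p → Set X) (hcover : (⋃ j, F j) ⊆ ⋃ i, C i) (N : ℕ)
    (hC : ∀ i : Fin p, (∃ j, C i ⊆ F j) ∨
      ∀ j, (C i ∩ F j).Finite ∧ (C i ∩ F j).ncard ≤ N) :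
    ∃ j, (⋃ k, F k) = F j := by
  have hF : Monotone F := monotone_nat_of_le_succ hmono
  have hstat : ∀ i, ∃ j, ∀ k, C i ∩ F k ⊆ F j := fun i => by
    rcases hC i with ⟨j, hj⟩ | h
    · exact ⟨j, fun k => Set.inter_subset_left.trans hj⟩
    · exact exists_inter_subset_of_ncard_le hF (C i) N h
  choose J hJ using hstat
  refine ⟨Finset.univ.sup J, Set.Subset.antisymm (fun x hx => ?_) (Set.subset_iUnion F _)⟩
  obtain ⟨i, hi⟩ := Set.mem_iUnion.1 (hcover hx)
  obtain ⟨k, hk⟩ := Set.mem_iUnion.1 hx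
  exact hF (Finset.le_sup (Finset.mem_univ i)) (hJ i k ⟨hi, hk⟩)
end
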